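/- Let g be a holomorphic function on the punctured unit disc 𝔻* and let c ∈ ℂ with c ≠ 0. Assume that for every θ ∈ ℝ there exists a branch L_θ of the logarithm on 𝔻 ∖ l^θ such that the map φ_θ(z) = g(z) + (c/(2πi))·L_θ(z) is injective on 𝔻 ∖ l^θ. Then for every such θ and branch L_θ, the derivative φ_θ′ is nonvanishing on 𝔻 ∖ l^θ, and the Schwarzian derivative S(φ_θ), defined and holomorphic on 𝔻 ∖ l^θ, extends to a holomorphic function ξ on all of 𝔻* which has at worst a pole at 0: there exists n ∈ ℕ such that z ↦ z^n·ξ(z) extends holomorphically across 0. -/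

import Mathlib

open Complex Metric Set Filter Topology

/-- The closed ray `{t·e^{iθ} : t ≥ 0} ⊆ ℂ`. -/
def lray (θ : ℝ) : Set ℂ :=
  {z : ℂ | ∃ t : ℝ, 0 ≤ t ∧ z = (t : ℂ) * Complex.exp (θ * Complex.I)}

/-- The Schwarzian derivative `S(f) = (f''/f')' - (1/2)·(f''/f')²`. -/
noncomputable def schwarzian (f : ℂ → ℂ) (z : ℂ) : ℂ :=
  deriv (fun w => deriv (deriv f) w / deriv f w) z
    - (1 / 2) * (deriv (deriv f) z / deriv f z) ^ 2

/-!
The derivative `ψ = g' + (c/2πi)/z` of the branches `φ_θ` does not depend on `θ` or on the branch,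
so `S(φ_θ) = (ψ'/ψ)' - (ψ'/ψ)²/2` is single valued. Taking the slit opposite to `z`, one of the
branches is univalent on the whole disc of radius `|z|` about `z`, so `ψ` has no zeros and the
distortion theorem bounds `z ψ'/ψ = z φ_θ''/φ_θ'`. Hence `z ψ'/ψ` has a removable singularity at
`0`, and `S(φ_θ)` has a pole of order at most two.

The distortion theorem is needed only up to the value of the constant. If a univalent `f` omits
`v`, then `log (f - v)` is univalent modulo `2πi`, so its image contains no disc of radius `> π`
and Bloch's theorem bounds its derivative `f'/(f - v)`. Taking for `v` the value of `f` at a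
nearby point `z₀` bounds `f'` by the difference quotient of `f` at `z₀`. The ratio of these two
functions is `1` at `z₀`, where its derivative is half of `f''/f'`, and this derivative is
controlled by the Schwarz lemma.
-/

theorem exists_analyticAt_pow_eq {f : ℂ → ℂ} {z : ℂ} (hf : AnalyticAt ℂ f z) (hz : f z ≠ 0)
    {n : ℕ} (hn : n ≠ 0) : ∃ r : ℂ → ℂ, AnalyticAt ℂ r z ∧ ∀ w, r w ^ n = f w := by
  refine ⟨fun w => f z ^ (n⁻¹ : ℂ) * (f w / f z) ^ (n⁻¹ : ℂ), ?_, fun w => ?_⟩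
  · refine analyticAt_const.mul ((hf.div_const).cpow analyticAt_const ?_)
    simp [hz]
  · rw [mul_pow, cpow_nat_inv_pow _ hn, cpow_nat_inv_pow _ hn, mul_div_cancel₀ _ hz]

theorem exists_eventually_eq_add_pow {f : ℂ → ℂ} {z : ℂ} (hf : AnalyticAt ℂ f z)
    (hne : ¬ ∀ᶠ w in 𝓝 z, f w = f z) :
    ∃ n ≠ 0, ∃ m : ℂ → ℂ, AnalyticAt ℂ m z ∧ m z = 0 ∧ deriv m z ≠ 0 ∧
      ∀ᶠ w in 𝓝 z, f w = f z + m w ^ n := by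
  obtain ⟨n, h, hh, hhz, hfh⟩ :=
    (hf.sub analyticAt_const).exists_eventuallyEq_pow_smul_nonzero_iff.2
      (show ¬ ∀ᶠ w in 𝓝 z, f w - f z = 0 by simpa only [sub_eq_zero] using hne)
  have hn : n ≠ 0 := by
    rintro rfl
    simpa [hhz.symm] using hfh.self_of_nhds
  obtain ⟨r, hr, hrn⟩ := exists_analyticAt_pow_eq hh hhz hn
  have hderiv : HasDerivAt (fun w => (w - z) * r w) (r z) z := by
    simpa using ((hasDerivAt_id z).sub_const z).fun_mul hr.differentiableAt.hasDerivAt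
  refine ⟨n, hn, fun w => (w - z) * r w, (analyticAt_id.sub analyticAt_const).mul hr, by simp,
    ?_, ?_⟩
  · rw [hderiv.deriv]
    exact fun h0 => hhz (by rw [← hrn, h0, zero_pow hn])
  · filter_upwards [hfh] with w hw
    simp only [Pi.sub_apply, smul_eq_mul] at hw
    rw [mul_pow, hrn]
    linear_combination hw

theorem deriv_ne_zero_of_injOn {f : ℂ → ℂ} {s : Set ℂ} {z : ℂ} (hf : AnalyticAt ℂ f z)
    (hs : s ∈ 𝓝 z) (hinj : InjOn f s) : deriv f z ≠ 0 := by
  have hne : ¬ ∀ᶠ w in 𝓝 z, f w = f z := fun hconst => by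
    obtain ⟨w, ⟨hw, hws⟩, hwz⟩ := (((hconst.and hs).filter_mono nhdsWithin_le_nhds).and
      (self_mem_nhdsWithin (a := z) (s := {z}ᶜ))).exists
    exact hwz (hinj hws (mem_of_mem_nhds hs) hw)
  obtain ⟨n, hn, m, hm, hmz, hm', hfm⟩ := exists_eventually_eq_add_pow hf hne
  obtain ⟨ω, hω⟩ : ∃ ω : ℂ, IsPrimitiveRoot ω n := ⟨_, isPrimitiveRoot_exp n hn⟩
  -- The local coordinate `m` is open at `z`, so it takes the value `ω * m w` near `z` as well.
  have hrotate : ∀ᶠ w in 𝓝 z, ∃ v ∈ s, f v = f z + m v ^ n ∧ m v = ω * m w := by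
    have himage : m '' {v | v ∈ s ∧ f v = f z + m v ^ n} ∈ 𝓝 (ω * m z) := by
      rw [hmz, mul_zero, ← hmz, ← hm.hasStrictDerivAt.map_nhds_eq hm']
      exact image_mem_map (inter_mem hs hfm)
    filter_upwards [(hm.continuousAt.const_mul ω).preimage_mem_nhds himage]
    rintro w ⟨v, ⟨hvs, hv⟩, hvw⟩
    exact ⟨v, hvs, hv, hvw⟩
  have hm_ne : ∀ᶠ w in 𝓝[≠] z, m w ≠ m z :=
    hm.differentiableAt.hasDerivAt.eventually_ne hm'
  obtain ⟨w, ⟨⟨⟨v, hvs, hfv, hvw⟩, hws⟩, hfw⟩, hmw⟩ :=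
    ((((hrotate.and hs).and hfm).filter_mono nhdsWithin_le_nhds).and hm_ne).exists
  have hvw_eq : v = w := hinj hvs hws (by rw [hfv, hfw, hvw, mul_pow, hω.pow_eq_one, one_mul])
  have hω_one : ω = 1 := by
    rw [hvw_eq, eq_comm, mul_eq_right₀ (hmz ▸ hmw)] at hvw
    exact hvw
  have hn_one : n = 1 := hω.unique (hω_one ▸ IsPrimitiveRoot.one)
  simp only [hn_one, pow_one] at hfm
  have hf_eq : f =ᶠ[𝓝 z] fun w => f z + m w := hfm
  rwa [hf_eq.deriv_eq, deriv_const_add]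

theorem mul_norm_sub_le_norm_image_sub_of_norm_deriv_sub_le {𝕜 E : Type*} [RCLike 𝕜]
    [NormedAddCommGroup E] [NormedSpace 𝕜 E] {f : 𝕜 → E} {s : Set 𝕜} {c : E} {a z : 𝕜} {C : ℝ}
    (hs : Convex ℝ s) (hf : ∀ w ∈ s, DifferentiableAt 𝕜 f w) (hC : ∀ w ∈ s, ‖deriv f w - c‖ ≤ C)
    (ha : a ∈ s) (hz : z ∈ s) : (‖c‖ - C) * ‖z - a‖ ≤ ‖f z - f a‖ := by
  have hlin : ‖(f z - z • c) - (f a - a • c)‖ ≤ C * ‖z - a‖ :=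
    hs.norm_image_sub_le_of_norm_hasDerivWithin_le (f := fun w => f w - w • c)
      (f' := fun w => deriv f w - c)
      (fun w hw => by
        simpa using! ((hf w hw).hasDerivAt.sub ((hasDerivAt_id w).smul_const c)).hasDerivWithinAt)
      hC ha hz
  calc (‖c‖ - C) * ‖z - a‖ = ‖(z - a) • c‖ - C * ‖z - a‖ := by rw [norm_smul]; ring
    _ = ‖(f z - f a) - ((f z - z • c) - (f a - a • c))‖ - C * ‖z - a‖ := by
      congr 2
      module
    _ ≤ ‖f z - f a‖ := by linarith [norm_sub_le (f z - f a) ((f z - z • c) - (f a - a • c))]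

theorem ball_subset_image_closedBall_of_norm_deriv_sub_le {f : ℂ → ℂ} {a : ℂ} {s C : ℝ}
    (hs : 0 < s) (hf : ∀ z ∈ closedBall a s, DifferentiableAt ℂ f z) (hf'a : deriv f a ≠ 0)
    (hC : ∀ z ∈ closedBall a s, ‖deriv f z - deriv f a‖ ≤ C) :
    ball (f a) ((‖deriv f a‖ - C) * s / 2) ⊆ f '' closedBall a s := by
  have ha : a ∈ closedBall a s := mem_closedBall_self hs.le
  have hcl : DiffContOnCl ℂ f (ball a s) := DifferentiableOn.diffContOnCl <| by
    rw [closure_ball a hs.ne']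
    exact fun z hz => (hf z hz).differentiableWithinAt
  have hsphere : ∀ z ∈ sphere a s, (‖deriv f a‖ - C) * s ≤ ‖f z - f a‖ := fun z hz => by
    have hlower := mul_norm_sub_le_norm_image_sub_of_norm_deriv_sub_le
      (convex_closedBall a s) hf hC ha (sphere_subset_closedBall hz)
    rwa [mem_sphere_iff_norm.1 hz] at hlower
  have hne : ∃ᶠ z in 𝓝 a, f z ≠ f a :=
    ((hf a ha).hasDerivAt.eventually_ne hf'a).frequently.filter_mono nhdsWithin_le_nhds
  exact hcl.ball_subset_image_closedBall hs hsphere hne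

theorem ball_subset_image_ball_of_norm_deriv_le {f : ℂ → ℂ} {a : ℂ} {ρ M : ℝ} (hρ : 0 < ρ)
    (hf : DifferentiableOn ℂ f (ball a ρ)) (hM : ∀ z ∈ ball a ρ, ‖deriv f z‖ ≤ M) :
    ball (f a) (ρ * ‖deriv f a‖ ^ 2 / (16 * M)) ⊆ f '' ball a ρ := by
  set A := ‖deriv f a‖ with hA_def
  rcases (norm_nonneg (deriv f a)).eq_or_lt with hA | hA
  · simp [hA_def, ← hA]
  have hAM : A ≤ M := hM a (mem_ball_self hρ)
  have hM0 : 0 < M := hA.trans_le hAM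
  set s := ρ * A / (4 * M) with hs_def
  have hs : 0 < s := by positivity
  have hsρ : s < ρ := by
    rw [hs_def, div_lt_iff₀ (by positivity)]
    nlinarith
  have hsub : closedBall a s ⊆ ball a ρ := closedBall_subset_ball hsρ
  have hderiv : ∀ z ∈ closedBall a s, ‖deriv f z - deriv f a‖ ≤ A / 2 := fun z hz => by
    have hmaps : MapsTo (deriv f) (ball a ρ) (closedBall (deriv f a) (2 * M)) := fun w hw => by
      rw [mem_closedBall, dist_eq_norm]
      linarith [norm_sub_le (deriv f w) (deriv f a), hM w hw]
    calc ‖deriv f z - deriv f a‖ ≤ 2 * M / ρ * dist z a := by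
          simpa only [dist_eq_norm] using
            dist_le_div_mul_dist_of_mapsTo_ball (hf.deriv isOpen_ball) hmaps (hsub hz)
      _ ≤ 2 * M / ρ * s := by gcongr; exact hz
      _ = A / 2 := by rw [hs_def]; field_simp; ring
  have hcover := ball_subset_image_closedBall_of_norm_deriv_sub_le hs
    (fun z hz => hf.differentiableAt (isOpen_ball.mem_nhds (hsub hz))) (norm_pos_iff.1 hA) hderiv
  have hradius : ρ * A ^ 2 / (16 * M) = (A - A / 2) * s / 2 := by rw [hs_def]; field_simp; ring
  exact hradius ▸ hcover.trans (image_mono hsub)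

theorem exists_ball_subset_image_ball {f : ℂ → ℂ} {z : ℂ} {R : ℝ} (hR : 0 < R)
    (hf : DifferentiableOn ℂ f (ball z R)) :
    ∃ w, ball w (R * ‖deriv f z‖ / 128) ⊆ f '' ball z R := by
  have hK : closedBall z (3 * R / 4) ⊆ ball z R := closedBall_subset_ball (by linarith)
  have hcont : ContinuousOn (fun w => ‖deriv f w‖) (closedBall z (3 * R / 4)) :=
    ((hf.deriv isOpen_ball).continuousOn.mono hK).norm
  have : CompleteSpace (closedBall z (3 * R / 4)) := isClosed_closedBall.completeSpace_coe
  -- Hofer's lemma: `‖f'‖` at most doubles on `ball a ρ`, while `ρ ‖f' a‖` is still large.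
  obtain ⟨ρ, hρ, ⟨a, ha⟩, hρR, hdist, hlarge, hdouble⟩ := hofer
    (⟨z, mem_closedBall_self (by positivity)⟩ : closedBall z (3 * R / 4)) (R / 4) (by positivity)
    hcont.domRestrict (fun _ => norm_nonneg _)
  simp only [Subtype.dist_eq, domRestrict_apply, Subtype.forall] at hdist hlarge hdouble
  have hsub : ball a ρ ⊆ closedBall z (3 * R / 4) := fun w hw => by
    have := dist_triangle w a z
    rw [mem_ball] at hw
    rw [mem_closedBall]
    linarith
  have hbound : ∀ w ∈ ball a ρ, ‖deriv f w‖ ≤ 2 * ‖deriv f a‖ := fun w hw =>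
    hdouble w (hsub hw) (mem_ball'.1 hw).le
  refine ⟨f a, (ball_subset_ball ?_).trans ((ball_subset_image_ball_of_norm_deriv_le hρ
    (hf.mono (hsub.trans hK)) hbound).trans (image_mono (hsub.trans hK)))⟩
  calc R * ‖deriv f z‖ / 128 = R / 4 * ‖deriv f z‖ / 32 := by ring
    _ ≤ ρ * ‖deriv f a‖ / 32 := by gcongr
    _ = ρ * ‖deriv f a‖ ^ 2 / (16 * (2 * ‖deriv f a‖)) := by
      rcases eq_or_ne ‖deriv f a‖ 0 with hA | hA
      · simp [hA]
      · field_simp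
        ring

theorem exists_hasDerivAt_logDeriv_exp_comp_eqOn {f : ℂ → ℂ} {z : ℂ} {R : ℝ}
    (hf : DifferentiableOn ℂ f (ball z R)) (hne : ∀ w ∈ ball z R, f w ≠ 0) :
    ∃ l : ℂ → ℂ, (∀ w ∈ ball z R, HasDerivAt l (logDeriv f w) w) ∧
      EqOn (exp ∘ l) f (ball z R) := by
  obtain ⟨l, hl⟩ := ((hf.deriv isOpen_ball).div hf hne).isExactOn_ball
  have hlogDeriv : EqOn (logDeriv f) (logDeriv (exp ∘ l)) (ball z R) := fun w hw => by
    rw [logDeriv_comp differentiableAt_exp (hl w hw).differentiableAt, Complex.logDeriv_exp,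
      Pi.one_apply, one_mul, (hl w hw).deriv, logDeriv]
  obtain ⟨a, ha, hfa⟩ := (logDeriv_eqOn_iff hf
    (fun w hw => (hl w hw).cexp.differentiableAt.differentiableWithinAt) isOpen_ball
    (convex_ball z R).isPreconnected (fun w _ => exp_ne_zero (l w)) hne).1 hlogDeriv
  refine ⟨fun w => log a + l w, fun w hw => (hl w hw).const_add _, fun w hw => ?_⟩
  rw [hfa hw, Function.comp_apply, exp_add, exp_log ha]
  rfl

theorem le_pi_of_ball_subset_image_of_injOn_exp_comp {l : ℂ → ℂ} {s : Set ℂ} {w : ℂ} {r : ℝ}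
    (hinj : InjOn (exp ∘ l) s) (hball : ball w r ⊆ l '' s) : r ≤ Real.pi := by
  by_contra! hr
  have hmem {b : ℝ} (hb : |b| = Real.pi) : w + b * I ∈ ball w r := by
    simpa [mem_ball, dist_eq_norm, hb] using hr
  obtain ⟨x, hx, hlx⟩ := hball (hmem (abs_of_pos Real.pi_pos))
  obtain ⟨y, hy, hly⟩ := hball (hmem ((abs_neg _).trans (abs_of_pos Real.pi_pos)))
  have hxy : x = y := hinj hx hy <| by
    rw [Function.comp_apply, Function.comp_apply, hlx, hly, exp_eq_exp_iff_exists_int]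
    exact ⟨1, by push_cast; ring⟩
  have hpi : (Real.pi : ℂ) * I = 0 := by
    rw [hxy, hly] at hlx
    push_cast at hlx
    linear_combination (-1 / 2 : ℂ) * hlx
  simp [Real.pi_ne_zero] at hpi

theorem mul_norm_deriv_le_of_notMem_image {f : ℂ → ℂ} {z v : ℂ} {R : ℝ} (hR : 0 < R)
    (hf : DifferentiableOn ℂ f (ball z R)) (hinj : InjOn f (ball z R))
    (hv : v ∉ f '' ball z R) : R * ‖deriv f z‖ ≤ 512 * ‖f z - v‖ := by
  have hne : ∀ w ∈ ball z R, f w - v ≠ 0 := fun w hw h => hv ⟨w, hw, sub_eq_zero.1 h⟩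
  obtain ⟨l, hl, hexp⟩ := exists_hasDerivAt_logDeriv_exp_comp_eqOn (hf.sub_const v) hne
  have hinj_exp : InjOn (exp ∘ l) (ball z R) :=
    ((sub_left_injective (b := v)).comp_injOn hinj).congr hexp.symm
  obtain ⟨w, hw⟩ := exists_ball_subset_image_ball hR
    fun x hx => (hl x hx).differentiableAt.differentiableWithinAt
  have hle := (le_pi_of_ball_subset_image_of_injOn_exp_comp hinj_exp hw).trans Real.pi_le_four
  have hz : z ∈ ball z R := mem_ball_self hR
  rw [(hl z hz).deriv, logDeriv_apply, deriv_sub_const, norm_div, div_le_iff₀ (by norm_num),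
    mul_div_assoc', div_le_iff₀ (norm_pos_iff.2 (hne z hz))] at hle
  linarith

theorem deriv_deriv_eq_two_mul_deriv_dslope {f : ℂ → ℂ} {z : ℂ} (hf : AnalyticAt ℂ f z) :
    deriv (deriv f) z = 2 * deriv (dslope f z) z := by
  have hq : AnalyticAt ℂ (dslope f z) z :=
    let ⟨_, hp⟩ := hf; ⟨_, hp.has_fpower_series_dslope_fslope⟩
  have hderiv : deriv f =ᶠ[𝓝 z] fun w => dslope f z w + (w - z) * deriv (dslope f z) w := by
    filter_upwards [hq.eventually_analyticAt] with w hw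
    have hf_eq : f = fun w => f z + (w - z) * dslope f z w := by
      ext w
      rw [← smul_eq_mul, sub_smul_dslope, add_sub_cancel]
    conv_lhs => rw [hf_eq]
    simpa using! ((((hasDerivAt_id w).sub_const z).mul
      hw.differentiableAt.hasDerivAt).const_add (f z)).deriv
  have hsum := hq.differentiableAt.hasDerivAt.add
    (((hasDerivAt_id z).sub_const z).mul hq.deriv.differentiableAt.hasDerivAt)
  rw [hderiv.deriv_eq]
  refine hsum.deriv.trans ?_
  simp [two_mul]

theorem dslope_ne_zero_of_injOn {f : ℂ → ℂ} {s : Set ℂ} {z w : ℂ} (hf : AnalyticAt ℂ f z)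
    (hs : s ∈ 𝓝 z) (hinj : InjOn f s) (hw : w ∈ s) : dslope f z w ≠ 0 := by
  rcases eq_or_ne w z with rfl | hwz
  · rw [dslope_same]
    exact deriv_ne_zero_of_injOn hf hs hinj
  · rw [dslope_of_ne f hwz, slope_def_field]
    exact div_ne_zero (sub_ne_zero.2 fun h => hwz (hinj hw (mem_of_mem_nhds hs) h))
      (sub_ne_zero.2 hwz)

-- Apply the omitted-value estimate on the ball about `w` through `z`, where `f` omits `f z`.
theorem norm_deriv_le_mul_norm_dslope {f : ℂ → ℂ} {z w : ℂ} {R : ℝ}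
    (hf : DifferentiableOn ℂ f (ball z R)) (hinj : InjOn f (ball z R))
    (hw : w ∈ ball z (R / 2)) : ‖deriv f w‖ ≤ 512 * ‖dslope f z w‖ := by
  rcases eq_or_ne w z with rfl | hwz
  · rw [dslope_same]
    linarith [norm_nonneg (deriv f w)]
  have hsub : ball w ‖w - z‖ ⊆ ball z R := ball_subset_ball' <| by
    rw [mem_ball_iff_norm] at hw
    rw [dist_eq_norm]
    linarith
  have hz : z ∈ ball z R := mem_ball_self (by linarith [pos_of_mem_ball hw])
  have hpos : 0 < ‖w - z‖ := norm_pos_iff.2 (sub_ne_zero.2 hwz)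
  have homit : f z ∉ f '' ball w ‖w - z‖ := by
    rintro ⟨x, hx, hfx⟩
    rw [hinj (hsub hx) hz hfx, mem_ball', dist_eq_norm] at hx
    exact hx.false
  have hle := mul_norm_deriv_le_of_notMem_image hpos (hf.mono hsub) (hinj.mono hsub) homit
  rw [← sub_smul_dslope, norm_smul, mul_left_comm] at hle
  exact le_of_mul_le_mul_left hle hpos

theorem mul_norm_logDeriv_deriv_le {f : ℂ → ℂ} {z : ℂ} {R : ℝ} (hR : 0 < R)
    (hf : DifferentiableOn ℂ f (ball z R)) (hinj : InjOn f (ball z R)) :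
    R * ‖logDeriv (deriv f) z‖ ≤ 2052 := by
  have hnhds : ball z R ∈ 𝓝 z := ball_mem_nhds z hR
  have hfz : AnalyticAt ℂ f z := hf.analyticAt hnhds
  have hf'z : deriv f z ≠ 0 := deriv_ne_zero_of_injOn hfz hnhds hinj
  have hsub : ball z (R / 2) ⊆ ball z R := ball_subset_ball (by linarith)
  have hq : DifferentiableOn ℂ (dslope f z) (ball z R) := (differentiableOn_dslope hnhds).2 hf
  have hq_ne : ∀ w ∈ ball z R, dslope f z w ≠ 0 := fun w =>
    dslope_ne_zero_of_injOn hfz hnhds hinj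
  set p : ℂ → ℂ := fun w => deriv f w / dslope f z w with hp_def
  have hpz : p z = 1 := by simp only [hp_def, dslope_same, div_self hf'z]
  have hp : DifferentiableOn ℂ p (ball z (R / 2)) :=
    ((hf.deriv isOpen_ball).div hq hq_ne).mono hsub
  have hmaps : MapsTo p (ball z (R / 2)) (closedBall (p z) 513) := fun w hw => by
    have hpw : ‖p w‖ ≤ 512 := by
      rw [norm_div, div_le_iff₀ (norm_pos_iff.2 (hq_ne w (hsub hw)))]
      exact norm_deriv_le_mul_norm_dslope hf hinj hw
    rw [hpz, mem_closedBall_iff_norm]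
    linarith [norm_sub_le (p w) 1, norm_one (α := ℂ)]
  have hp' : deriv p z = logDeriv (deriv f) z / 2 := by
    calc deriv p z = logDeriv p z := by rw [logDeriv_apply, hpz, div_one]
      _ = logDeriv (deriv f) z - logDeriv (dslope f z) z :=
        logDeriv_div z hf'z (hq_ne z (mem_ball_self hR)) hfz.deriv.differentiableAt
          (hq.differentiableAt hnhds)
      _ = logDeriv (deriv f) z / 2 := by
        rw [logDeriv_apply, logDeriv_apply, dslope_same, deriv_deriv_eq_two_mul_deriv_dslope hfz]
        ring
  have hschwarz := norm_deriv_le_div_of_mapsTo_ball hp hmaps (half_pos hR)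
  rw [hp', norm_div, norm_ofNat, le_div_iff₀ (half_pos hR)] at hschwarz
  linarith

/-- `ψ` is the derivative of an injective function on `s`. Applied to the single-valued derivative
of a multivalued function, this says that the latter has a univalent branch on `s`. -/
def HasUnivalentPrimitiveOn (ψ : ℂ → ℂ) (s : Set ℂ) : Prop :=
  ∃ f : ℂ → ℂ, InjOn f s ∧ ∀ z ∈ s, HasDerivAt f (ψ z) z

namespace HasUnivalentPrimitiveOn

variable {ψ : ℂ → ℂ} {s t : Set ℂ} {z : ℂ}

theorem mono (h : HasUnivalentPrimitiveOn ψ t) (hst : s ⊆ t) : HasUnivalentPrimitiveOn ψ s :=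
  let ⟨f, hinj, hf⟩ := h
  ⟨f, hinj.mono hst, fun z hz => hf z (hst hz)⟩

theorem ne_zero (h : HasUnivalentPrimitiveOn ψ s) (hs : IsOpen s) (hz : z ∈ s) : ψ z ≠ 0 := by
  obtain ⟨f, hinj, hf⟩ := h
  have hfs : DifferentiableOn ℂ f s := fun w hw => (hf w hw).differentiableAt.differentiableWithinAt
  rw [← (hf z hz).deriv]
  exact deriv_ne_zero_of_injOn (hfs.analyticAt (hs.mem_nhds hz)) (hs.mem_nhds hz) hinj

theorem mul_norm_logDeriv_le {R : ℝ} (h : HasUnivalentPrimitiveOn ψ (ball z R)) (hR : 0 < R) :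
    R * ‖logDeriv ψ z‖ ≤ 2052 := by
  obtain ⟨f, hinj, hf⟩ := h
  have hderiv : deriv f =ᶠ[𝓝 z] ψ := by
    filter_upwards [ball_mem_nhds z hR] with w hw using (hf w hw).deriv
  rw [logDeriv_apply, ← hderiv.deriv_eq, ← hderiv.eq_of_nhds, ← logDeriv_apply]
  exact mul_norm_logDeriv_deriv_le hR
    (fun w hw => (hf w hw).differentiableAt.differentiableWithinAt) hinj

end HasUnivalentPrimitiveOn

/-- The Schwarzian derivative of any primitive of `ψ`. -/
noncomputable def schwarzianOfDeriv (ψ : ℂ → ℂ) (z : ℂ) : ℂ :=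
  deriv (logDeriv ψ) z - (1 / 2) * logDeriv ψ z ^ 2

theorem schwarzian_eq_schwarzianOfDeriv {f ψ : ℂ → ℂ} {z : ℂ} (h : deriv f =ᶠ[𝓝 z] ψ) :
    schwarzian f z = schwarzianOfDeriv ψ z := by
  have hlogDeriv : logDeriv (deriv f) =ᶠ[𝓝 z] logDeriv ψ := h.deriv.div h
  rw [schwarzianOfDeriv, ← hlogDeriv.deriv_eq, ← hlogDeriv.eq_of_nhds]
  rfl

section Pole

variable {ψ : ℂ → ℂ} {s : Set ℂ}

theorem differentiableOn_logDeriv (hψ : DifferentiableOn ℂ ψ s) (hs : IsOpen s)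
    (hne : ∀ z ∈ s, ψ z ≠ 0) : DifferentiableOn ℂ (logDeriv ψ) s :=
  (hψ.deriv hs).div hψ hne

theorem differentiableOn_schwarzianOfDeriv (hψ : DifferentiableOn ℂ ψ s) (hs : IsOpen s)
    (hne : ∀ z ∈ s, ψ z ≠ 0) : DifferentiableOn ℂ (schwarzianOfDeriv ψ) s :=
  have hu := differentiableOn_logDeriv hψ hs hne
  (hu.deriv hs).sub ((hu.pow 2).const_mul _)

theorem exists_differentiableOn_eqOn_sub_mul {u : ℂ → ℂ} {a : ℂ} (hs : s ∈ 𝓝 a)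
    (hu : DifferentiableOn ℂ u (s \ {a})) (hO : u =O[𝓝[≠] a] fun z => (z - a)⁻¹) :
    ∃ V : ℂ → ℂ, DifferentiableOn ℂ V s ∧ EqOn V (fun z => (z - a) * u z) (s \ {a}) := by
  have hbdd : IsBoundedUnder (· ≤ ·) (𝓝[≠] a) (norm ∘ fun z => (z - a) * u z) := by
    obtain ⟨C, hC⟩ := hO.bound
    refine isBoundedUnder_of_eventually_le (a := C) ?_
    filter_upwards [hC, self_mem_nhdsWithin] with z hz hza
    have hpos : 0 < ‖z - a‖ := norm_pos_iff.2 (sub_ne_zero.2 hza)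
    rwa [norm_inv, ← div_eq_mul_inv, le_div_iff₀ hpos, mul_comm, ← norm_mul] at hz
  refine ⟨_, differentiableOn_update_limUnder_of_isLittleO hs
    ((differentiableOn_id.sub_const a).mul hu) ?_,
    fun z hz => Function.update_of_ne hz.2 _ _⟩
  simpa using! hbdd.isLittleO_sub_self_inv

theorem exists_differentiableOn_eq_sq_mul_schwarzianOfDeriv {a : ℂ} (hs : IsOpen s) (ha : a ∈ s)
    (hψ : DifferentiableOn ℂ ψ (s \ {a})) (hne : ∀ z ∈ s \ {a}, ψ z ≠ 0)
    (hO : logDeriv ψ =O[𝓝[≠] a] fun z => (z - a)⁻¹) :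
    ∃ Ξ : ℂ → ℂ, DifferentiableOn ℂ Ξ s ∧
      ∀ z ∈ s \ {a}, Ξ z = (z - a) ^ 2 * schwarzianOfDeriv ψ z := by
  have hs' : IsOpen (s \ {a}) := hs.sdiff isClosed_singleton
  have hu := differentiableOn_logDeriv hψ hs' hne
  obtain ⟨V, hV, hVu⟩ := exists_differentiableOn_eqOn_sub_mul (hs.mem_nhds ha) hu hO
  refine ⟨fun z => (z - a) * deriv V z - V z - (1 / 2) * V z ^ 2,
    (((differentiableOn_id.sub_const a).mul (hV.deriv hs)).sub hV).sub ((hV.pow 2).const_mul _),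
    fun z hz => ?_⟩
  have hV' : deriv V z = logDeriv ψ z + (z - a) * deriv (logDeriv ψ) z := by
    rw [(hVu.eventuallyEq_of_mem (hs'.mem_nhds hz)).deriv_eq]
    simpa using! (((hasDerivAt_id z).sub_const a).mul
      (hu.differentiableAt (hs'.mem_nhds hz)).hasDerivAt).deriv
  simp only [schwarzianOfDeriv, hV', hVu hz]
  ring

end Pole

theorem isClosed_lray (θ : ℝ) : IsClosed (lray θ) := by
  have himage : lray θ = (fun t : ℝ => t • exp (θ * I)) '' Ici 0 := by
    ext z
    simp only [lray, mem_ofPred_eq, mem_image, mem_Ici, real_smul, eq_comm]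
  rw [himage]
  exact (isClosedEmbedding_smul_left (exp_ne_zero _)).isClosedMap _ isClosed_Ici

theorem zero_mem_lray (θ : ℝ) : (0 : ℂ) ∈ lray θ := ⟨0, le_rfl, by simp⟩

theorem sdiff_lray_subset_sdiff_zero (s : Set ℂ) (θ : ℝ) : s \ lray θ ⊆ s \ {0} :=
  sdiff_subset_sdiff_right (singleton_subset_iff.2 (zero_mem_lray θ))

theorem disjoint_ball_norm_lray (z : ℂ) : Disjoint (ball z ‖z‖) (lray (arg z + Real.pi)) := by
  rw [Set.disjoint_left]
  rintro _ hw ⟨t, ht, rfl⟩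
  have hsub : z - t * exp ((arg z + Real.pi : ℝ) * I) = (‖z‖ + t : ℝ) * exp (arg z * I) := by
    push_cast
    rw [add_mul, exp_add, exp_pi_mul_I]
    linear_combination -norm_mul_exp_arg_mul_I z
  rw [mem_ball', dist_eq_norm, hsub, norm_mul, norm_exp_ofReal_mul_I, mul_one, norm_real,
    Real.norm_of_nonneg (by positivity)] at hw
  linarith

theorem hasDerivAt_of_eventually_exp_eq {L : ℂ → ℂ} {z : ℂ} (hL : ContinuousAt L z)
    (hexp : ∀ᶠ w in 𝓝 z, exp (L w) = w) : HasDerivAt L z⁻¹ z := by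
  have hderiv := (hasDerivAt_exp (L z)).of_local_left_inverse hL (exp_ne_zero _) hexp
  rwa [hexp.self_of_nhds] at hderiv

theorem hasDerivAt_add_const_mul_of_exp_eq {g L : ℂ → ℂ} {U : Set ℂ} {z : ℂ} (k : ℂ)
    (hU : IsOpen U) (hg : DifferentiableOn ℂ g U) (hL : DifferentiableOn ℂ L U)
    (hexp : ∀ w ∈ U, exp (L w) = w) (hz : z ∈ U) :
    HasDerivAt (fun w => g w + k * L w) (deriv g z + k * z⁻¹) z :=
  have hUz : U ∈ 𝓝 z := hU.mem_nhds hz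
  (hg.differentiableAt hUz).hasDerivAt.add <|
    (hasDerivAt_of_eventually_exp_eq (hL.continuousOn.continuousAt hUz)
      (eventually_of_mem hUz hexp)).const_mul k

theorem isBigO_logDeriv_inv_of_hasUnivalentPrimitiveOn_sdiff_lray {ψ : ℂ → ℂ} {s : Set ℂ}
    (hs : s ∈ 𝓝 0) (h : ∀ θ : ℝ, HasUnivalentPrimitiveOn ψ (s \ lray θ)) :
    logDeriv ψ =O[𝓝[≠] 0] fun z => z⁻¹ := by
  obtain ⟨r, hr, hrs⟩ := Metric.mem_nhds_iff.1 hs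
  refine .of_bound 2052 ?_
  filter_upwards [self_mem_nhdsWithin, mem_nhdsWithin_of_mem_nhds (ball_mem_nhds 0 (half_pos hr))]
    with z hz0 hzr
  have hz : 0 < ‖z‖ := norm_pos_iff.2 hz0
  have hball : ball z ‖z‖ ⊆ ball 0 r := ball_subset_ball' <| by
    rw [mem_ball] at hzr
    rw [← dist_zero_right]
    linarith
  have hsub : ball z ‖z‖ ⊆ s \ lray (arg z + Real.pi) :=
    subset_sdiff.2 ⟨hball.trans hrs, disjoint_ball_norm_lray z⟩
  rw [norm_inv, ← div_eq_mul_inv, le_div_iff₀' hz]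
  exact ((h _).mono hsub).mul_norm_logDeriv_le hz

theorem ne_zero_of_hasUnivalentPrimitiveOn_sdiff_lray {ψ : ℂ → ℂ} {s : Set ℂ} (hs : IsOpen s)
    (h : ∀ θ : ℝ, HasUnivalentPrimitiveOn ψ (s \ lray θ)) {z : ℂ} (hz : z ∈ s \ {0}) :
    ψ z ≠ 0 :=
  (h (arg z + Real.pi)).ne_zero (hs.sdiff (isClosed_lray _))
    ⟨hz.1, disjoint_left.1 (disjoint_ball_norm_lray z) (mem_ball_self (norm_pos_iff.2 hz.2))⟩

/-- for a uniformizable structure with parabolic monodromy `z ↦ z + c`,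
`c ≠ 0`, each branch `φ_θ = g + (c/2πi)·L_θ` has nonvanishing derivative, and its
Schwarzian derivative extends to a holomorphic function `ξ` on `𝔻*` having at worst
a pole at `0`. -/
theorem schwarzian_of_parabolic_uniformizable_meromorphic
    (g : ℂ → ℂ) (c : ℂ) (hc : c ≠ 0)
    (hg : DifferentiableOn ℂ g (ball (0 : ℂ) 1 \ {0}))
    (hyp : ∀ θ : ℝ, ∃ L : ℂ → ℂ,
      DifferentiableOn ℂ L (ball (0 : ℂ) 1 \ lray θ) ∧
      (∀ z ∈ ball (0 : ℂ) 1 \ lray θ, Complex.exp (L z) = z) ∧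
      InjOn (fun z => g z + c / (2 * (Real.pi : ℂ) * Complex.I) * L z)
        (ball (0 : ℂ) 1 \ lray θ)) :
    ∀ θ : ℝ, ∀ L : ℂ → ℂ,
      DifferentiableOn ℂ L (ball (0 : ℂ) 1 \ lray θ) →
      (∀ z ∈ ball (0 : ℂ) 1 \ lray θ, Complex.exp (L z) = z) →
      InjOn (fun z => g z + c / (2 * (Real.pi : ℂ) * Complex.I) * L z)
        (ball (0 : ℂ) 1 \ lray θ) →
      (∀ z ∈ ball (0 : ℂ) 1 \ lray θ,
        deriv (fun w => g w + c / (2 * (Real.pi : ℂ) * Complex.I) * L w) z ≠ 0) ∧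
      ∃ ξ : ℂ → ℂ, DifferentiableOn ℂ ξ (ball (0 : ℂ) 1 \ {0}) ∧
        (∀ z ∈ ball (0 : ℂ) 1 \ lray θ,
          ξ z = schwarzian (fun w => g w + c / (2 * (Real.pi : ℂ) * Complex.I) * L w) z) ∧
        ∃ n : ℕ, ∃ Ξ : ℂ → ℂ, DifferentiableOn ℂ Ξ (ball (0 : ℂ) 1) ∧
          ∀ z ∈ ball (0 : ℂ) 1 \ {0}, Ξ z = z ^ n * ξ z := by
  set k := c / (2 * (Real.pi : ℂ) * I)
  set ψ : ℂ → ℂ := fun z => deriv g z + k * z⁻¹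
  have hD : IsOpen (ball (0 : ℂ) 1 \ {0}) := isOpen_ball.sdiff isClosed_singleton
  have hψ : DifferentiableOn ℂ ψ (ball 0 1 \ {0}) :=
    (hg.deriv hD).add ((differentiableOn_inv.mono fun z hz => hz.2).const_mul k)
  have hopen (θ) : IsOpen (ball 0 1 \ lray θ) := isOpen_ball.sdiff (isClosed_lray θ)
  have hsub := sdiff_lray_subset_sdiff_zero (ball 0 1)
  have hprim (θ) : HasUnivalentPrimitiveOn ψ (ball 0 1 \ lray θ) :=
    let ⟨_, hL, hexp, hinj⟩ := hyp θ
    ⟨_, hinj, fun _ =>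
      hasDerivAt_add_const_mul_of_exp_eq k (hopen θ) (hg.mono (hsub θ)) hL hexp⟩
  have hne : ∀ z ∈ ball 0 1 \ {0}, ψ z ≠ 0 := fun z =>
    ne_zero_of_hasUnivalentPrimitiveOn_sdiff_lray isOpen_ball hprim
  have hO := isBigO_logDeriv_inv_of_hasUnivalentPrimitiveOn_sdiff_lray
    (ball_mem_nhds 0 one_pos) hprim
  obtain ⟨Ξ, hΞ, hΞψ⟩ := exists_differentiableOn_eq_sq_mul_schwarzianOfDeriv isOpen_ball
    (mem_ball_self one_pos) hψ hne (by simpa using hO)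
  intro θ L hL hexp _
  have hderiv : EqOn (deriv fun w => g w + k * L w) ψ (ball 0 1 \ lray θ) := fun z hz =>
    (hasDerivAt_add_const_mul_of_exp_eq k (hopen θ) (hg.mono (hsub θ)) hL hexp hz).deriv
  exact ⟨fun z hz => hderiv hz ▸ hne z (hsub θ hz), schwarzianOfDeriv ψ,
    differentiableOn_schwarzianOfDeriv hψ hD hne, fun z hz => (schwarzian_eq_schwarzianOfDeriv
      (hderiv.eventuallyEq_of_mem ((hopen θ).mem_nhds hz))).symm, 2, Ξ, hΞ, by simpa using hΞψ⟩
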